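/- Let f be the higher energy function of order ℓ, strictly positive on (u, ∞), where u = r_ℓ is the largest zero of f when ℓ ≥ 1 and u = 0 when ℓ = 0. Let (x_n)_{n=1}^N be a strictly increasing sequence in (u, ∞) satisfying 1/(x_{n+1}−x_n) = Σ_{k=n+1}^N (−f'(x_k)/f(x_k)) for all 1 ≤ n < N (as holds for the part of any MIW sequence with right boundary condition at +∞ contained in (u,∞)). Suppose v > u satisfies p_ℓ'(v)/p_ℓ(v) ≤ v/4, and let n(v) = #{1 ≤ k ≤ N : x_k ≤ v} with n(v) < N. Then x_N² ≤ x_{n(v)+1}² + 4(1 + log(N − n(v))). -/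

import Mathlib

/-!
The bound rests on `-f'/f ≥ t / 2` to the right of `v`. Since `f'/f = -t + 2 p_l'/p_l`, this asks
for `p_l'(t)/p_l(t) ≤ t/4`, which propagates from `v` to all `t > v` because `p_l'/p_l` is
nonincreasing beyond the largest zero. The monotonicity needs no factorization of `p_l` into
linear factors: it is the Laguerre inequality `p_l' ^ 2 - p_l p_l'' ≥ 0`, which for Hermite
polynomials reduces to Turán's inequality (`hermiteFun_turan`), proved by induction from the
three-term recurrence.

The relation for the gaps then gives `1 / (x_{n+1} - x_n) ≥ (N - n) x_{n+1} / 2` for `n > n(v)`,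
whence `x_{n+1} ^ 2 - x_n ^ 2 ≤ 2 x_{n+1} (x_{n+1} - x_n) ≤ 4 / (N - n)`. Summing over `n` produces
four times a harmonic number, bounded by `1 + log`. Positivity of the points is used throughout;
it holds because the zero set of `p_l` is symmetric, so the largest zero is nonnegative.
-/

open MeasureTheory Filter Set

noncomputable section

/-- The probabilists' Hermite polynomial `p_l(x) = (-1)^l e^{x^2/2} (d/dx)^l e^{-x^2/2}`
as a real function. -/
def hermiteFun (l : ℕ) (x : ℝ) : ℝ :=
  (-1 : ℝ) ^ l * Real.exp (x ^ 2 / 2) *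
    iteratedDeriv l (fun t => Real.exp (-t ^ 2 / 2)) x

/-- The higher energy function of order `l` with normalizing constant `c`. -/
def heFun (l : ℕ) (c : ℝ) (x : ℝ) : ℝ :=
  c * hermiteFun l x ^ 2 * Real.exp (-x ^ 2 / 2)

/-- `c` is the constant making `heFun l c` a probability density on `ℝ`. -/
def IsNormalizing (l : ℕ) (c : ℝ) : Prop :=
  0 < c ∧ (∫ x : ℝ, heFun l c x) = 1

/-- `(x n)_{n=1}^N` is an MIW sequence of `f` : strictly increasing, avoiding the
zeros of `f`, and satisfying the MIW recursion for `1 < n < N`. -/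
def IsMIW (f : ℝ → ℝ) (N : ℕ) (x : ℕ → ℝ) : Prop :=
  (∀ n, 1 ≤ n → n < N → x n < x (n + 1)) ∧
  (∀ n, 1 ≤ n → n ≤ N → f (x n) ≠ 0) ∧
  (∀ n, 1 < n → n < N →
    1 / (x (n + 1) - x n) - 1 / (x n - x (n - 1)) = deriv f (x n) / f (x n))

/-- Left boundary condition at `x_0 = -∞`. -/
def LeftBC (f : ℝ → ℝ) (x : ℕ → ℝ) : Prop :=
  1 / (x 2 - x 1) = deriv f (x 1) / f (x 1)

/-- Right boundary condition at `x_{N+1} = +∞`. -/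
def RightBC (f : ℝ → ℝ) (N : ℕ) (x : ℕ → ℝ) : Prop :=
  -(1 / (x N - x (N - 1))) = deriv f (x N) / f (x N)

/-- Right boundary condition at a point (`none` denoting `+∞`). -/
def RightBCAt (f : ℝ → ℝ) (N : ℕ) (x : ℕ → ℝ) : Option ℝ → Prop
  | none => -(1 / (x N - x (N - 1))) = deriv f (x N) / f (x N)
  | some b => x N < b ∧
      1 / (b - x N) - 1 / (x N - x (N - 1)) = deriv f (x N) / f (x N)

/-- `r 1 < ⋯ < r l` enumerates the zeros of `f`. -/
def ZeroEnum (f : ℝ → ℝ) (l : ℕ) (r : ℕ → ℝ) : Prop :=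
  (∀ i j, 1 ≤ i → i < j → j ≤ l → r i < r j) ∧
  {y : ℝ | f y = 0} = r '' Set.Icc 1 l

/-- Membership in the region `R_k = (r_k, r_{k+1})`, with the conventions
`r_0 = -∞` and `r_{l+1} = +∞`. -/
def InRegion (l : ℕ) (r : ℕ → ℝ) (k : ℕ) (t : ℝ) : Prop :=
  (k = 0 ∨ r k < t) ∧ (k = l ∨ t < r (k + 1))

/-- The region `R_k` as a subset of `ℝ`. -/
def regionSet (l : ℕ) (r : ℕ → ℝ) (k : ℕ) : Set ℝ := {t | InRegion l r k t}

/-- The number of points of `(x n)_{n=1}^N` lying in region `R_k`. -/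
def regionCount (l : ℕ) (r : ℕ → ℝ) (N : ℕ) (x : ℕ → ℝ) (k : ℕ) : ℕ :=
  Set.ncard {n : ℕ | n ∈ Set.Icc 1 N ∧ InRegion l r k (x n)}

/-- `n(t) = max {0 ≤ k ≤ N : x_k ≤ t}` (convention `x_0 = -∞`); for an increasing
sequence this is the number of points among `x_1, …, x_N` that are `≤ t`. -/
def nIdx (N : ℕ) (x : ℕ → ℝ) (t : ℝ) : ℕ :=
  Set.ncard {n : ℕ | n ∈ Set.Icc 1 N ∧ x n ≤ t}

/-- `1/(x_{n+1}-x_n) - 1/(x_n-x_{n-1})`, with the conventions `x_0 = -∞`,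
`x_{N+1} = +∞` (so the corresponding reciprocals vanish). -/
def gapTerm (N : ℕ) (x : ℕ → ℝ) (n : ℕ) : ℝ :=
  (if n < N then 1 / (x (n + 1) - x n) else 0) -
    (if 1 < n then 1 / (x n - x (n - 1)) else 0)

/-- The MIW energy `H(x_1,…,x_N)`. -/
def Hfun (N : ℕ) (x : ℕ → ℝ) : ℝ :=
  ∑ n ∈ Finset.Icc 1 N, x n ^ 2 + ∑ n ∈ Finset.Icc 1 N, gapTerm N x n ^ 2

/-- Partial derivative `∂H/∂x_n` evaluated at the configuration `x`. -/
def partialH (N : ℕ) (x : ℕ → ℝ) (n : ℕ) : ℝ :=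
  deriv (fun s => Hfun N (Function.update x n s)) (x n)

/-- The empirical distribution `(1/N) ∑_{n=1}^N δ_{x_n}`. -/
def empDist (N : ℕ) (x : ℕ → ℝ) : Measure ℝ :=
  (N : ENNReal)⁻¹ • ∑ n ∈ Finset.Icc 1 N, Measure.dirac (x n)

/-- The probability measure on `S` with density proportional to `f`. -/
def densMeasure (f : ℝ → ℝ) (S : Set ℝ) : Measure ℝ :=
  (volume.restrict S).withDensity fun t => ENNReal.ofReal (f t / ∫ u in S, f u)

/-- The Stein solution `g_h(x) = (1/f(x)) ∫_a^x f(t)(h(t) - E_P[h]) dt`, where the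
integral runs over the part of `S` to the left of `x`. -/
def steinG (f : ℝ → ℝ) (S : Set ℝ) (h : ℝ → ℝ) (x : ℝ) : ℝ :=
  (1 / f x) * ∫ t in S ∩ Set.Iio x, f t * (h t - ∫ s, h s ∂(densMeasure f S))

/-- The intermediate density `ρ(t) = 1/((N-1)(x_{n(t)+1} - x_{n(t)}))` on `(x_1, x_N)`. -/
def interDens (N : ℕ) (x : ℕ → ℝ) (t : ℝ) : ℝ :=
  Set.indicator (Set.Ioo (x 1) (x N))
    (fun u => 1 / (((N : ℝ) - 1) * (x (nIdx N x u + 1) - x (nIdx N x u)))) t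

/-- The intermediate distribution `R` with density `ρ`. -/
def interDist (N : ℕ) (x : ℕ → ℝ) : Measure ℝ :=
  volume.withDensity fun t => ENNReal.ofReal (interDens N x t)

open Polynomial in
/-- Hermite polynomials form an Appell sequence. -/
lemma derivative_hermite_succ (n : ℕ) :
    derivative (hermite (n + 1)) = ((n : ℤ[X]) + 1) * hermite n := by
  induction n with
  | zero => simp
  | succ n ih =>
    rw [hermite_succ (n + 1), derivative_sub, derivative_mul, ih, derivative_X, derivative_mul]
    have h : derivative ((n : ℤ[X]) + 1) = 0 := by simp
    rw [h, hermite_succ n]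
    push_cast
    ring

lemma hermiteFun_eq_aeval (l : ℕ) (x : ℝ) :
    hermiteFun l x = Polynomial.aeval x (Polynomial.hermite l) := by
  rw [Polynomial.hermite_eq_deriv_gaussian', hermiteFun, iteratedDeriv_eq_iterate]
  simp only [neg_div]
  ring

lemma hermiteFun_zero (x : ℝ) : hermiteFun 0 x = 1 := by
  simp [hermiteFun_eq_aeval]

lemma hermiteFun_one (x : ℝ) : hermiteFun 1 x = x := by
  simp [hermiteFun_eq_aeval]

lemma hasDerivAt_hermiteFun_succ (n : ℕ) (x : ℝ) :
    HasDerivAt (hermiteFun (n + 1)) ((n + 1) * hermiteFun n x) x := by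
  have h := (Polynomial.hermite (n + 1)).hasDerivAt_aeval x
  rw [derivative_hermite_succ] at h
  have e : hermiteFun (n + 1) = fun y => Polynomial.aeval y (Polynomial.hermite (n + 1)) :=
    funext (hermiteFun_eq_aeval _)
  rw [e, hermiteFun_eq_aeval]
  simpa using h

lemma hermiteFun_add_two (n : ℕ) (x : ℝ) :
    hermiteFun (n + 2) x = x * hermiteFun (n + 1) x - (n + 1) * hermiteFun n x := by
  simp only [hermiteFun_eq_aeval]
  rw [Polynomial.hermite_succ (n + 1), derivative_hermite_succ]
  simp

lemma hermiteFun_neg (n : ℕ) (x : ℝ) : hermiteFun n (-x) = (-1) ^ n * hermiteFun n x := by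
  induction n using Nat.twoStepInduction with
  | zero => simp [hermiteFun_zero]
  | one => simp [hermiteFun_one]
  | more n h0 h1 =>
    rw [hermiteFun_add_two, hermiteFun_add_two, h0, h1]
    ring

/-- Turán's inequality for Hermite polynomials. The Turán determinant `D_n` obeys
`D_{n+1} = p_{n+1} ^ 2 + (n + 1) D_n`. -/
lemma hermiteFun_turan (n : ℕ) (x : ℝ) :
    0 ≤ hermiteFun (n + 1) x ^ 2 - hermiteFun (n + 2) x * hermiteFun n x := by
  induction n with
  | zero =>
    rw [hermiteFun_add_two]
    simp only [zero_add, hermiteFun_zero, hermiteFun_one]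
    norm_num
    nlinarith
  | succ n ih =>
    have h2 := hermiteFun_add_two n x
    have h3 := hermiteFun_add_two (n + 1) x
    have key : hermiteFun (n + 1 + 1) x ^ 2 - hermiteFun (n + 1 + 2) x * hermiteFun (n + 1) x
        = hermiteFun (n + 1) x ^ 2
          + (n + 1) * (hermiteFun (n + 1) x ^ 2 - hermiteFun (n + 2) x * hermiteFun n x) := by
      rw [h3]
      push_cast
      simp only [show n + 1 + 1 = n + 2 from rfl]
      linear_combination hermiteFun (n + 2) x * h2
    rw [key]
    positivity

lemma differentiable_hermiteFun (l : ℕ) : Differentiable ℝ (hermiteFun l) := by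
  have e : hermiteFun l = fun y => Polynomial.aeval y (Polynomial.hermite l) :=
    funext (hermiteFun_eq_aeval _)
  rw [e]
  exact Polynomial.differentiable_aeval _

/-- On a half-line free of zeros, `p_l' / p_l` is nonincreasing: its derivative is
`-(p_l' ^ 2 - p_l p_l'') / p_l ^ 2`, whose numerator is controlled by Turán's inequality. -/
lemma antitoneOn_logDeriv_hermiteFun (l : ℕ) (u : ℝ) (h : ∀ t, u < t → hermiteFun l t ≠ 0) :
    AntitoneOn (fun t => deriv (hermiteFun l) t / hermiteFun l t) (Ioi u) := by
  rcases l with _ | n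
  · have e : hermiteFun 0 = fun _ => (1 : ℝ) := funext hermiteFun_zero
    intro a _ b _ _
    simp [e]
  · have hd : ∀ t, deriv (hermiteFun (n + 1)) t = (n + 1) * hermiteFun n t :=
      fun t => (hasDerivAt_hermiteFun_succ n t).deriv
    simp only [hd]
    have hD : ∀ t ∈ Ioi u, HasDerivAt (fun t => (n + 1) * hermiteFun n t / hermiteFun (n + 1) t)
        (((n + 1) * deriv (hermiteFun n) t * hermiteFun (n + 1) t
          - (n + 1) * hermiteFun n t * ((n + 1) * hermiteFun n t))
            / hermiteFun (n + 1) t ^ 2) t := fun t ht =>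
      ((differentiable_hermiteFun n t).hasDerivAt.const_mul _).div
        (hasDerivAt_hermiteFun_succ n t) (h t ht)
    refine antitoneOn_of_hasDerivWithinAt_nonpos (convex_Ioi u)
      (fun t ht => (hD t ht).continuousAt.continuousWithinAt)
      (fun t ht => (hD t (interior_subset ht)).hasDerivWithinAt) ?_
    intro t _
    refine div_nonpos_of_nonpos_of_nonneg ?_ (sq_nonneg _)
    rcases n with _ | m
    · have e : hermiteFun 0 = fun _ => (1 : ℝ) := funext hermiteFun_zero
      simp [e]
    · rw [(hasDerivAt_hermiteFun_succ m t).deriv]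
      have hT := mul_nonneg (by positivity : (0 : ℝ) ≤ (m + 2) * (m + 1)) (hermiteFun_turan m t)
      have hS : 0 ≤ ((m : ℝ) + 2) * hermiteFun (m + 1) t ^ 2 := by positivity
      push_cast
      simp only [show m + 1 + 1 = m + 2 from rfl]
      linarith

lemma heFun_eq_zero_iff {l : ℕ} {c : ℝ} (hc : 0 < c) (t : ℝ) :
    heFun l c t = 0 ↔ hermiteFun l t = 0 := by
  simp [heFun, hc.ne', (Real.exp_pos _).ne']

lemma logDeriv_heFun (l : ℕ) {c : ℝ} (hc : 0 < c) (t : ℝ) (ht : hermiteFun l t ≠ 0) :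
    deriv (heFun l c) t / heFun l c t
      = -t + 2 * (deriv (hermiteFun l) t / hermiteFun l t) := by
  have hp := (differentiable_hermiteFun l t).hasDerivAt
  have he : HasDerivAt (fun s : ℝ => Real.exp (-s ^ 2 / 2)) (Real.exp (-t ^ 2 / 2) * (-t)) t := by
    have h1 : HasDerivAt (fun s : ℝ => -s ^ 2 / 2) (-t) t :=
      ((hasDerivAt_pow 2 t).fun_neg.div_const 2).congr_deriv (by push_cast; ring)
    exact h1.exp
  have hf : HasDerivAt (heFun l c) _ t := ((hp.fun_pow 2).const_mul c).mul he
  rw [hf.deriv, heFun]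
  have := (Real.exp_pos (-t ^ 2 / 2)).ne'
  have := hc.ne'
  field_simp
  ring

/-- The largest zero is nonnegative because the zero set of `p_l` is symmetric about `0`. -/
lemma largest_zero_nonneg {l : ℕ} {u : ℝ} (h0 : hermiteFun l u = 0)
    (h : ∀ t, u < t → hermiteFun l t ≠ 0) : 0 ≤ u := by
  by_contra! hu
  exact h (-u) (by linarith) (by rw [hermiteFun_neg, h0, mul_zero])

/-- Points with index beyond `nIdx N x v` lie to the right of `v`. -/
lemma lt_of_nIdx_lt {N : ℕ} {x : ℕ → ℝ} (hmono : ∀ n, 1 ≤ n → n < N → x n < x (n + 1)) {v : ℝ}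
    {k : ℕ} (hk : nIdx N x v < k) (hkN : k ≤ N) : v < x k := by
  by_contra! hle
  have hx : ∀ j, j ≤ k → 1 ≤ j → x j ≤ x k := by
    intro j hj
    induction hj using Nat.decreasingInduction with
    | self => exact fun _ => le_rfl
    | of_succ i hi ih => exact fun h1 => (hmono i h1 (by omega)).le.trans (ih (by omega))
  have hsub : Set.Icc 1 k ⊆ {n : ℕ | n ∈ Set.Icc 1 N ∧ x n ≤ v} := fun j hj =>
    ⟨⟨hj.1, hj.2.trans hkN⟩, (hx j hj.2 hj.1).trans hle⟩
  have hcard := Set.ncard_le_ncard hsub ((Set.finite_Icc 1 N).subset fun _ hj => hj.1)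
  have hIcc : (Set.Icc 1 k).ncard = k := by
    rw [← Finset.coe_Icc, Set.ncard_coe_finset, Nat.card_Icc]
    omega
  rw [hIcc] at hcard
  exact absurd hk (not_lt.mpr hcard)

theorem MIW_tail_xN_upper_bound (l : ℕ) (c : ℝ) (hc : IsNormalizing l c)
    (u : ℝ)
    (hu : (l = 0 ∧ u = 0) ∨
      (1 ≤ l ∧ heFun l c u = 0 ∧ ∀ t, u < t → heFun l c t ≠ 0))
    (N : ℕ) (x : ℕ → ℝ)
    (hmono : ∀ n, 1 ≤ n → n < N → x n < x (n + 1))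
    (hgt : ∀ n, 1 ≤ n → n ≤ N → u < x n)
    (hrel : ∀ n, 1 ≤ n → n < N →
      1 / (x (n + 1) - x n)
        = ∑ k ∈ Finset.Icc (n + 1) N, -(deriv (heFun l c) (x k) / heFun l c (x k)))
    (v : ℝ) (huv : u < v)
    (hv : deriv (hermiteFun l) v / hermiteFun l v ≤ v / 4)
    (hnv : nIdx N x v < N) :
    x N ^ 2 ≤ x (nIdx N x v + 1) ^ 2
      + 4 * (1 + Real.log ((N : ℝ) - (nIdx N x v : ℝ))) := by
  obtain ⟨hc0, -⟩ := hc
  have hp : ∀ t, u < t → hermiteFun l t ≠ 0 := by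
    intro t ht
    rcases hu with ⟨rfl, -⟩ | ⟨-, -, h⟩
    · simp [hermiteFun_zero]
    · exact fun h0 => h t ht ((heFun_eq_zero_iff hc0 t).2 h0)
  have hu0 : 0 ≤ u := by
    rcases hu with ⟨-, rfl⟩ | ⟨-, h, -⟩
    · exact le_rfl
    · exact largest_zero_nonneg ((heFun_eq_zero_iff hc0 u).1 h) hp
  set m := nIdx N x v with hm
  have hxv : ∀ k, m < k → k ≤ N → v < x k := fun k hk hkN => lt_of_nIdx_lt hmono hk hkN
  have hterm : ∀ k, m < k → k ≤ N →
      x k / 2 ≤ -(deriv (heFun l c) (x k) / heFun l c (x k)) := by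
    intro k hk hkN
    have hvk := hxv k hk hkN
    have hanti := antitoneOn_logDeriv_hermiteFun l u hp huv (huv.trans hvk) hvk.le
    rw [logDeriv_heFun l hc0 _ (hp _ (huv.trans hvk))]
    simp only at hanti
    linarith
  have hle : ∀ a b, m < a → a ≤ b → b ≤ N → x a ≤ x b := by
    intro a b ha hab
    induction b, hab using Nat.le_induction with
    | base => exact fun _ => le_rfl
    | succ i hi ih => exact fun h => (ih (by omega)).trans (hmono i (by omega) (by omega)).le
  have hstep : ∀ j : ℕ, m + 1 + (j + 1) ≤ N →
      x (N - j) ^ 2 ≤ x (N - (j + 1)) ^ 2 + 4 * ((j : ℝ) + 1)⁻¹ := by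
    intro j hj
    obtain ⟨n, hn⟩ : ∃ n, N = n + (j + 1) := ⟨N - (j + 1), by omega⟩
    have e1 : N - j = n + 1 := by omega
    have e2 : N - (j + 1) = n := by omega
    rw [e1, e2]
    have hx0 : 0 < x n := (hu0.trans_lt huv).trans (hxv n (by omega) (by omega))
    have hlt := hmono n (by omega) (by omega)
    have hsum : ((j : ℝ) + 1) * (x (n + 1) / 2) ≤ 1 / (x (n + 1) - x n) := by
      rw [hrel n (by omega) (by omega)]
      have hcard : (Finset.Icc (n + 1) N).card = j + 1 := by
        rw [Nat.card_Icc]; omega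
      have := Finset.card_nsmul_le_sum (Finset.Icc (n + 1) N)
        (fun k => -(deriv (heFun l c) (x k) / heFun l c (x k))) (x (n + 1) / 2) ?_
      · rw [hcard, nsmul_eq_mul] at this
        exact_mod_cast this
      · intro k hk
        rw [Finset.mem_Icc] at hk
        have h1 := hterm k (by omega) hk.2
        have h2 := hle (n + 1) k (by omega) hk.1 hk.2
        linarith
    have hd : 0 < x (n + 1) - x n := sub_pos.2 hlt
    have hj1 : (0 : ℝ) < (j : ℝ) + 1 := by positivity
    rw [le_div_iff₀ hd] at hsum
    have hprod : x (n + 1) * (x (n + 1) - x n) ≤ 2 * ((j : ℝ) + 1)⁻¹ := by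
      rw [← div_eq_mul_inv, le_div_iff₀ hj1]
      linarith
    nlinarith
  have htel : ∀ j : ℕ, m + 1 + j ≤ N → x N ^ 2 ≤ x (N - j) ^ 2 + 4 * (harmonic j : ℝ) := by
    intro j
    induction j with
    | zero => simp
    | succ j ih =>
      intro hj
      have h1 := ih (by omega)
      have h2 := hstep j hj
      rw [harmonic_succ]
      push_cast
      linarith
  have hfin := htel (N - (m + 1)) (by omega)
  rw [show N - (N - (m + 1)) = m + 1 by omega] at hfin
  -- For `N = m + 1` the left side is `log 0 = 0`.
  have hlog : Real.log ((N - (m + 1) : ℕ) : ℝ) ≤ Real.log ((N : ℝ) - m) := by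
    rw [← Nat.cast_sub hnv.le]
    rcases Nat.eq_zero_or_pos (N - (m + 1)) with h0 | h0
    · rw [h0]
      simpa using Real.log_natCast_nonneg (N - m)
    · exact Real.log_le_log (by exact_mod_cast h0) (by exact_mod_cast (by omega))
  have := harmonic_le_one_add_log (N - (m + 1))
  linarith
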